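/- The best-response map BR is continuous on the set 𝓡. -/

import Mathlib

/-!
The reflections of the plane in the axes and in the diagonal preserve Lebesgue measure and the
square, hence preserve nice densities, and each region `Ri θ` is the image of `R1 θ` under a
composition of them. So it is enough to study `I1` for all nice densities at once (`IsNiceDensity.angular_I1`): it is
nonnegative, positive for `θ ∈ (0, π/2]`, and continuous on `[0, π/2]`. Continuity is dominated
convergence: for `θ ∈ [0, π/2]` a point with `0 < x ≤ 1` and `0 < y` lies in the sector exactly when its
argument `arctan (y / x)` is `< θ`, so the indicators converge off a line through the origin.

A component `arctan (num / den)` is clearly continuous where `den ≠ 0`. Where `den = 0 < num` it is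
equal nearby to `π / 2 - arctan (den / num)`, which is continuous (`continuousWithinAt_BRcomp`).
It remains to see that numerator and denominator never vanish together on `𝓡`: if the denominator
vanishes, then so do the two angles in it, and as `θmin > 0` the constraints defining `𝓡` force the
two opposite angles to be positive. The numerator involves one of these.
-/

open MeasureTheory Real Set

noncomputable section

/-- The square `[-1,1]²`. -/
def Sq : Set (ℝ × ℝ) := Set.Icc (-1 : ℝ) 1 ×ˢ Set.Icc (-1 : ℝ) 1

/-- A probability density supported on `[-1,1]²`, continuous and positive
almost everywhere on the square. -/
structure IsNiceDensity (f : ℝ × ℝ → ℝ) : Prop where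
  nonneg : ∀ p, 0 ≤ f p
  vanish : ∀ p ∉ Sq, f p = 0
  total : (∫ p in Sq, f p) = 1
  cont : ContinuousOn f Sq
  pos_ae : ∀ᵐ p ∂(volume.restrict Sq), 0 < f p

/-- Region `R1(θ) = {0 < x ≤ 1, 0 < y < x·tan θ}`; for `θ = π/2` it is the full
open quadrant. -/
def R1 (θ : ℝ) : Set (ℝ × ℝ) :=
  {p | 0 < p.1 ∧ p.1 ≤ 1 ∧ 0 < p.2 ∧ (θ = π / 2 ∨ p.2 < p.1 * tan θ)}

def R2 (θ : ℝ) : Set (ℝ × ℝ) :=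
  {p | -1 ≤ p.1 ∧ p.1 < 0 ∧ 0 < p.2 ∧ (θ = π / 2 ∨ p.2 < -p.1 * tan θ)}

def R3 (θ : ℝ) : Set (ℝ × ℝ) :=
  {p | -1 ≤ p.1 ∧ p.1 < 0 ∧ 0 < -p.2 ∧ (θ = π / 2 ∨ -p.2 < -p.1 * tan θ)}

def R4 (θ : ℝ) : Set (ℝ × ℝ) :=
  {p | 0 < p.1 ∧ p.1 ≤ 1 ∧ 0 < -p.2 ∧ (θ = π / 2 ∨ -p.2 < p.1 * tan θ)}

def R5 (θ : ℝ) : Set (ℝ × ℝ) :=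
  {p | 0 < p.2 ∧ p.2 ≤ 1 ∧ 0 < p.1 ∧ (θ = π / 2 ∨ p.1 < p.2 * tan θ)}

def R6 (θ : ℝ) : Set (ℝ × ℝ) :=
  {p | 0 < p.2 ∧ p.2 ≤ 1 ∧ 0 < -p.1 ∧ (θ = π / 2 ∨ -p.1 < p.2 * tan θ)}

def R7 (θ : ℝ) : Set (ℝ × ℝ) :=
  {p | -1 ≤ p.2 ∧ p.2 < 0 ∧ 0 < -p.1 ∧ (θ = π / 2 ∨ -p.1 < -p.2 * tan θ)}

def R8 (θ : ℝ) : Set (ℝ × ℝ) :=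
  {p | -1 ≤ p.2 ∧ p.2 < 0 ∧ 0 < p.1 ∧ (θ = π / 2 ∨ p.1 < -p.2 * tan θ)}

def I1 (f : ℝ × ℝ → ℝ) (θ : ℝ) : ℝ := ∫ p in R1 θ, f p
def I2 (f : ℝ × ℝ → ℝ) (θ : ℝ) : ℝ := ∫ p in R2 θ, f p
def I3 (f : ℝ × ℝ → ℝ) (θ : ℝ) : ℝ := ∫ p in R3 θ, f p
def I4 (f : ℝ × ℝ → ℝ) (θ : ℝ) : ℝ := ∫ p in R4 θ, f p
def I5 (f : ℝ × ℝ → ℝ) (θ : ℝ) : ℝ := ∫ p in R5 θ, f p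
def I6 (f : ℝ × ℝ → ℝ) (θ : ℝ) : ℝ := ∫ p in R6 θ, f p
def I7 (f : ℝ × ℝ → ℝ) (θ : ℝ) : ℝ := ∫ p in R7 θ, f p
def I8 (f : ℝ × ℝ → ℝ) (θ : ℝ) : ℝ := ∫ p in R8 θ, f p

def Q1p (f : ℝ × ℝ → ℝ) : ℝ := ∫ p in {p ∈ Sq | 0 < p.1}, f p
def Q1m (f : ℝ × ℝ → ℝ) : ℝ := ∫ p in {p ∈ Sq | p.1 < 0}, f p
def Q2p (f : ℝ × ℝ → ℝ) : ℝ := ∫ p in {p ∈ Sq | 0 < p.2}, f p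
def Q2m (f : ℝ × ℝ → ℝ) : ℝ := ∫ p in {p ∈ Sq | p.2 < 0}, f p

def K1 (f : ℝ × ℝ → ℝ) (n : ℕ) : ℝ := Q1m f ^ ((n - 1) / 2) * Q1p f ^ ((n - 3) / 2)
def K2 (f : ℝ × ℝ → ℝ) (n : ℕ) : ℝ := Q1m f ^ ((n - 3) / 2) * Q1p f ^ ((n - 1) / 2)
def L1 (f : ℝ × ℝ → ℝ) (n : ℕ) : ℝ := Q2m f ^ ((n - 3) / 2) * Q2p f ^ ((n - 1) / 2)
def L2 (f : ℝ × ℝ → ℝ) (n : ℕ) : ℝ := Q2m f ^ ((n - 1) / 2) * Q2p f ^ ((n - 3) / 2)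

/-- One equation of the equilibrium system: if the denominator is nonzero then
`θ = arctan (num / den)`; if the denominator is zero and the numerator positive then
`θ = π/2`; if both vanish, no constraint is imposed. -/
def EqnHolds (θ num den : ℝ) : Prop :=
  if den = 0 then (num = 0 ∨ θ = π / 2) else θ = arctan (num / den)

/-- The equilibrium system of the vote-trading game. -/
def EqSys (f : ℝ × ℝ → ℝ) (n : ℕ) (θ1 θ2 θ3 θ4 θ5 θ6 θ7 θ8 : ℝ) : Prop :=
  EqnHolds θ1 ((I6 f θ6 + I7 f θ7) * K1 f n) ((I7 f θ7 + I8 f θ8) * L1 f n) ∧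
  EqnHolds θ2 ((I5 f θ5 + I8 f θ8) * K2 f n) ((I7 f θ7 + I8 f θ8) * L1 f n) ∧
  EqnHolds θ3 ((I5 f θ5 + I8 f θ8) * K2 f n) ((I5 f θ5 + I6 f θ6) * L2 f n) ∧
  EqnHolds θ4 ((I6 f θ6 + I7 f θ7) * K1 f n) ((I5 f θ5 + I6 f θ6) * L2 f n) ∧
  EqnHolds θ5 ((I3 f θ3 + I4 f θ4) * L2 f n) ((I2 f θ2 + I3 f θ3) * K2 f n) ∧
  EqnHolds θ6 ((I3 f θ3 + I4 f θ4) * L2 f n) ((I1 f θ1 + I4 f θ4) * K1 f n) ∧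
  EqnHolds θ7 ((I1 f θ1 + I2 f θ2) * L1 f n) ((I1 f θ1 + I4 f θ4) * K1 f n) ∧
  EqnHolds θ8 ((I1 f θ1 + I2 f θ2) * L1 f n) ((I2 f θ2 + I3 f θ3) * K2 f n)

/-- The minimum of the eight ratios `K1/L1, K2/L1, K2/L2, K1/L2, L2/K2, L2/K1, L1/K1, L1/K2`. -/
def Qmin (f : ℝ × ℝ → ℝ) (n : ℕ) : ℝ :=
  min (min (min (K1 f n / L1 f n) (K2 f n / L1 f n)) (min (K2 f n / L2 f n) (K1 f n / L2 f n)))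
    (min (min (L2 f n / K2 f n) (L2 f n / K1 f n)) (min (L1 f n / K1 f n) (L1 f n / K2 f n)))

def θmin (f : ℝ × ℝ → ℝ) (n : ℕ) : ℝ := arctan (Qmin f n)

/-- A single component of the best-response map: `arctan (num/den)`, read as `π/2`
when the denominator vanishes (and the numerator is positive). -/
def BRcomp (num den : ℝ) : ℝ := if den = 0 then π / 2 else arctan (num / den)

/-- The best-response map `BR : [0,π/2]⁸ → [0,π/2]⁸`; here the tuple coordinates
`θ 0, …, θ 7` stand for `θ1, …, θ8`. -/
def BR (f : ℝ × ℝ → ℝ) (n : ℕ) (θ : Fin 8 → ℝ) : Fin 8 → ℝ :=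
  ![BRcomp ((I6 f (θ 5) + I7 f (θ 6)) * K1 f n) ((I7 f (θ 6) + I8 f (θ 7)) * L1 f n),
    BRcomp ((I5 f (θ 4) + I8 f (θ 7)) * K2 f n) ((I7 f (θ 6) + I8 f (θ 7)) * L1 f n),
    BRcomp ((I5 f (θ 4) + I8 f (θ 7)) * K2 f n) ((I5 f (θ 4) + I6 f (θ 5)) * L2 f n),
    BRcomp ((I6 f (θ 5) + I7 f (θ 6)) * K1 f n) ((I5 f (θ 4) + I6 f (θ 5)) * L2 f n),
    BRcomp ((I3 f (θ 2) + I4 f (θ 3)) * L2 f n) ((I2 f (θ 1) + I3 f (θ 2)) * K2 f n),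
    BRcomp ((I3 f (θ 2) + I4 f (θ 3)) * L2 f n) ((I1 f (θ 0) + I4 f (θ 3)) * K1 f n),
    BRcomp ((I1 f (θ 0) + I2 f (θ 1)) * L1 f n) ((I1 f (θ 0) + I4 f (θ 3)) * K1 f n),
    BRcomp ((I1 f (θ 0) + I2 f (θ 1)) * L1 f n) ((I2 f (θ 1) + I3 f (θ 2)) * K2 f n)]

/-- The set `𝓡 ⊆ [0,π/2]⁸` on which the best response map is studied. -/
def RSet (f : ℝ × ℝ → ℝ) (n : ℕ) : Set (Fin 8 → ℝ) :=
  {θ | (∀ i, θ i ∈ Set.Icc (0 : ℝ) (π / 2)) ∧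
    θmin f n ≤ θ 0 + θ 2 ∧ θmin f n ≤ θ 1 + θ 3 ∧
    θmin f n ≤ θ 4 + θ 6 ∧ θmin f n ≤ θ 5 + θ 7}

open Filter Topology

/-! ### Positivity of integrals of a nice density -/

lemma IsNiceDensity.integrable {f : ℝ × ℝ → ℝ} (hf : IsNiceDensity f) : Integrable f := by
  have hcomp : IsCompact Sq := isCompact_Icc.prod isCompact_Icc
  refine (integrableOn_iff_integrable_of_support_subset (s := Sq) ?_).1
    (hf.cont.integrableOn_compact hcomp)
  intro p hp
  by_contra h
  exact hp (hf.vanish p h)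

/-- A nice density has positive mass on any set that contains a nonempty open part of the square. -/
lemma IsNiceDensity.setIntegral_pos {f : ℝ × ℝ → ℝ} (hf : IsNiceDensity f) {S U : Set (ℝ × ℝ)}
    (hU : IsOpen U) (hne : U.Nonempty) (hUS : U ⊆ S) (hUSq : U ⊆ Sq) :
    0 < ∫ p in S, f p := by
  rw [setIntegral_pos_iff_support_of_nonneg_ae (Eventually.of_forall hf.nonneg)
    hf.integrable.integrableOn]
  refine (hU.measure_pos volume hne).trans_le ?_
  have hpos : ∀ᵐ p ∂(volume : Measure (ℝ × ℝ)), p ∈ Sq → 0 < f p :=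
    (ae_restrict_iff' (measurableSet_Icc.prod measurableSet_Icc)).1 hf.pos_ae
  apply measure_mono_ae
  filter_upwards [hpos] with p hp hpU
  exact ⟨(hp (hUSq hpU)).ne', hUS hpU⟩

lemma IsNiceDensity.Q_pos {f : ℝ × ℝ → ℝ} (hf : IsNiceDensity f) :
    0 < Q1p f ∧ 0 < Q1m f ∧ 0 < Q2p f ∧ 0 < Q2m f := by
  have key : ∀ (S : Set (ℝ × ℝ)) (a b : ℝ), 0 ≤ a + 1 → a + 1 ≤ 1 → 0 ≤ b + 1 → b + 1 ≤ 1 →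
      Ioo a (a + 1) ×ˢ Ioo b (b + 1) ⊆ S → 0 < ∫ p in S, f p := by
    intro S a b h1 h2 h3 h4 hS
    refine hf.setIntegral_pos (isOpen_Ioo.prod isOpen_Ioo)
      ((nonempty_Ioo.2 (by linarith)).prod (nonempty_Ioo.2 (by linarith))) hS ?_
    rintro p ⟨⟨h5, h6⟩, ⟨h7, h8⟩⟩
    exact ⟨⟨by linarith, by linarith⟩, ⟨by linarith, by linarith⟩⟩
  refine ⟨key _ 0 0 ?_ ?_ ?_ ?_ ?_, key _ (-1) 0 ?_ ?_ ?_ ?_ ?_, key _ 0 0 ?_ ?_ ?_ ?_ ?_,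
    key _ 0 (-1) ?_ ?_ ?_ ?_ ?_⟩ <;> try norm_num
  all_goals
    rintro p ⟨⟨h5, h6⟩, ⟨h7, h8⟩⟩
    simp only [Sq, mem_ofPred_eq, mem_prod, mem_Icc]
    refine ⟨⟨⟨?_, ?_⟩, ⟨?_, ?_⟩⟩, ?_⟩ <;> linarith

lemma IsNiceDensity.KL_pos {f : ℝ × ℝ → ℝ} (hf : IsNiceDensity f) (n : ℕ) :
    0 < K1 f n ∧ 0 < K2 f n ∧ 0 < L1 f n ∧ 0 < L2 f n := by
  obtain ⟨h1, h2, h3, h4⟩ := hf.Q_pos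
  unfold K1 K2 L1 L2
  refine ⟨?_, ?_, ?_, ?_⟩ <;> positivity

lemma IsNiceDensity.θmin_pos {f : ℝ × ℝ → ℝ} (hf : IsNiceDensity f) (n : ℕ) : 0 < θmin f n := by
  obtain ⟨h1, h2, h3, h4⟩ := hf.KL_pos n
  rw [θmin, arctan_pos, Qmin]
  simp only [lt_min_iff]
  refine ⟨⟨⟨?_, ?_⟩, ?_, ?_⟩, ⟨?_, ?_⟩, ?_, ?_⟩ <;> positivity

/-! ### The mass of a sector as a function of its angle -/

/-- The properties of the mass `g θ` of a sector of opening angle `θ ∈ [0, π/2]`. -/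
structure IsSectorMass (g : ℝ → ℝ) : Prop where
  nonneg : ∀ θ, 0 ≤ g θ
  pos : ∀ θ, 0 < θ → θ ≤ π / 2 → 0 < g θ
  cont : ContinuousOn g (Icc 0 (π / 2))

/-- The sector `R1 θ` consists of the points with `0 < x ≤ 1`, `0 < y` and argument less than
`θ`; the convention at `π / 2` is absorbed since an arctangent is always less than `π / 2`. -/
lemma mem_R1_iff {θ : ℝ} (hθ : θ ∈ Icc 0 (π / 2)) (p : ℝ × ℝ) :
    p ∈ R1 θ ↔ (0 < p.1 ∧ p.1 ≤ 1 ∧ 0 < p.2) ∧ arctan (p.2 / p.1) < θ := by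
  simp only [R1, mem_ofPred_eq, and_assoc]
  refine and_congr_right fun hx => and_congr_right fun _ => and_congr_right fun _ => ?_
  rcases hθ.2.eq_or_lt with rfl | hlt
  · simp [arctan_lt_pi_div_two]
  · have h0 : -(π / 2) < θ := by linarith [hθ.1, pi_pos]
    rw [or_iff_right hlt.ne, mul_comm, ← div_lt_iff₀ hx]
    conv_rhs => rw [← arctan_tan h0 hlt]
    exact arctan_strictMono.lt_iff_lt.symm

lemma measurableSet_R1 (θ : ℝ) : MeasurableSet (R1 θ) := by
  by_cases h : θ = π / 2 <;> simp only [R1, h, true_or, false_or] <;> measurability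

lemma ae_notMem_line (c : ℝ) : ∀ᵐ p : ℝ × ℝ, p.2 ≠ p.1 * c := by
  have hm : MeasurableSet {p : ℝ × ℝ | p.2 = p.1 * c} :=
    measurableSet_eq_fun measurable_snd (measurable_fst.mul_const c)
  have h : (volume : Measure (ℝ × ℝ)) {p | p.2 = p.1 * c} = 0 := by
    rw [Measure.volume_eq_prod, Measure.measure_prod_null hm]
    refine Eventually.of_forall fun x => ?_
    have : Prod.mk x ⁻¹' {p : ℝ × ℝ | p.2 = p.1 * c} = {x * c} := by ext; simp
    simp [this]
  simpa [ae_iff] using h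

lemma IsNiceDensity.angular_I1 {f : ℝ × ℝ → ℝ} (hf : IsNiceDensity f) :
    IsSectorMass (I1 f) where
  nonneg θ := integral_nonneg hf.nonneg
  pos θ h0 h1 := by
    obtain ⟨c, hc, hcR⟩ : ∃ c : ℝ, 0 < c ∧ (θ = π / 2 ∨ c = tan θ) := by
      rcases h1.eq_or_lt with h | h
      · exact ⟨1, one_pos, Or.inl h⟩
      · exact ⟨tan θ, tan_pos_of_pos_of_lt_pi_div_two h0 h, Or.inr rfl⟩
    refine hf.setIntegral_pos
      (U := (Ioo 0 1 ×ˢ Ioo 0 1) ∩ {p : ℝ × ℝ | p.2 < p.1 * c}) ?_ ?_ ?_ ?_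
    · exact (isOpen_Ioo.prod isOpen_Ioo).inter
        (isOpen_lt continuous_snd (continuous_fst.mul_const c))
    · refine ⟨(1 / 2, min 1 c / 4), ⟨⟨by norm_num, by norm_num⟩, ?_, ?_⟩, ?_⟩
      · have : 0 < min 1 c := lt_min one_pos hc
        simp only; positivity
      · have := min_le_left 1 c
        simp only; linarith
      · have := min_le_right 1 c
        simp only [mem_ofPred_eq]; linarith
    · rintro p ⟨⟨⟨a, b⟩, ⟨d, -⟩⟩, e⟩
      refine ⟨a, b.le, d, hcR.imp id fun h => ?_⟩
      rw [← h]
      exact e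
    · rintro p ⟨⟨⟨a, b⟩, ⟨d, e⟩⟩, -⟩
      exact ⟨⟨by linarith, b.le⟩, ⟨by linarith, e.le⟩⟩
  cont := by
    intro θ₀ hθ₀
    have hI : I1 f = fun θ => ∫ p, (R1 θ).indicator f p := by
      funext θ
      exact (integral_indicator (measurableSet_R1 θ)).symm
    rw [hI]
    refine continuousWithinAt_of_dominated (bound := f) ?_ ?_ hf.integrable ?_
    · exact Eventually.of_forall fun θ =>
        (hf.integrable.indicator (measurableSet_R1 θ)).aestronglyMeasurable
    · refine Eventually.of_forall fun θ => Eventually.of_forall fun p => ?_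
      refine (norm_indicator_le_norm_self f p).trans_eq ?_
      exact Real.norm_of_nonneg (hf.nonneg p)
    · filter_upwards [ae_notMem_line (tan θ₀)] with p hp
      -- Off the boundary line, membership in the sector is locally constant in the angle.
      have hev : ∀ᶠ θ in 𝓝[Icc 0 (π / 2)] θ₀, (p ∈ R1 θ ↔ p ∈ R1 θ₀) := by
        by_cases hq : 0 < p.1 ∧ p.1 ≤ 1 ∧ 0 < p.2
        · have hne : arctan (p.2 / p.1) ≠ θ₀ := by
            rintro rfl
            apply hp
            rw [tan_arctan, mul_div_cancel₀ _ hq.1.ne']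
          rcases lt_or_gt_of_ne hne with h | h
          · filter_upwards [self_mem_nhdsWithin,
              mem_nhdsWithin_of_mem_nhds (lt_mem_nhds h)] with θ hθ hlt
            rw [mem_R1_iff hθ, mem_R1_iff hθ₀]
            exact and_congr_right fun _ => iff_of_true hlt h
          · filter_upwards [self_mem_nhdsWithin,
              mem_nhdsWithin_of_mem_nhds (gt_mem_nhds h)] with θ hθ hlt
            rw [mem_R1_iff hθ, mem_R1_iff hθ₀]
            exact and_congr_right fun _ => iff_of_false (not_lt.2 hlt.le) (not_lt.2 h.le)
        · filter_upwards [self_mem_nhdsWithin] with θ hθ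
          rw [mem_R1_iff hθ, mem_R1_iff hθ₀]
          tauto
      refine (continuousWithinAt_const (b := (R1 θ₀).indicator f p)).congr_of_eventuallyEq ?_ rfl
      filter_upwards [hev] with θ hθ
      by_cases h : p ∈ R1 θ₀
      · rw [indicator_of_mem h, indicator_of_mem (hθ.2 h)]
      · rw [indicator_of_notMem h, indicator_of_notMem (mt hθ.1 h)]

/-! ### Reduction of the eight sectors to the first -/

lemma IsNiceDensity.comp {f : ℝ × ℝ → ℝ} (hf : IsNiceDensity f) (e : (ℝ × ℝ) ≃ₜ (ℝ × ℝ))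
    (he : MeasurePreserving e) (hSq : e ⁻¹' Sq = Sq) : IsNiceDensity (f ∘ e) where
  nonneg p := hf.nonneg _
  vanish p hp := hf.vanish _ fun h => hp (hSq ▸ h)
  total := by
    have h := he.setIntegral_preimage_emb e.measurableEmbedding f Sq
    rw [hSq, hf.total] at h
    exact h
  cont := hf.cont.comp e.continuous.continuousOn fun p hp => by
    rw [← hSq] at hp
    exact hp
  pos_ae := by
    have h := (he.restrict_preimage_emb e.measurableEmbedding Sq).quasiMeasurePreserving.ae
      hf.pos_ae
    rwa [hSq] at h

/-- If a symmetry of the square carries the sectors `R1 θ` to the sectors `R θ`, then the masses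
of the latter have the same properties as `I1`. -/
lemma IsNiceDensity.isSectorMass {f : ℝ × ℝ → ℝ} (hf : IsNiceDensity f)
    (e : (ℝ × ℝ) ≃ₜ (ℝ × ℝ)) (he : MeasurePreserving e) (hSq : e ⁻¹' Sq = Sq)
    (R : ℝ → Set (ℝ × ℝ)) (hR : ∀ θ, e ⁻¹' R θ = R1 θ) :
    IsSectorMass (fun θ => ∫ p in R θ, f p) := by
  have h := (hf.comp e he hSq).angular_I1
  have hI : I1 (f ∘ e) = fun θ => ∫ p in R θ, f p := by
    funext θ
    rw [← he.setIntegral_preimage_emb e.measurableEmbedding, hR]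
    rfl
  rwa [hI] at h

lemma IsNiceDensity.isSectorMass_all {f : ℝ × ℝ → ℝ} (hf : IsNiceDensity f) :
    (IsSectorMass (I1 f) ∧ IsSectorMass (I2 f) ∧ IsSectorMass (I3 f) ∧ IsSectorMass (I4 f)) ∧
    (IsSectorMass (I5 f) ∧ IsSectorMass (I6 f) ∧ IsSectorMass (I7 f) ∧ IsSectorMass (I8 f)) := by
  let e := Homeomorph.refl ℝ
  let m := Homeomorph.neg ℝ
  have hid : MeasurePreserving e := MeasurePreserving.id volume
  have hneg : MeasurePreserving m := Measure.measurePreserving_neg volume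
  let s := Homeomorph.prodComm ℝ ℝ
  have hs : MeasurePreserving s := Measure.measurePreserving_swap
  refine ⟨⟨hf.angular_I1,
    hf.isSectorMass (m.prodCongr e) (hneg.prod hid) ?_ R2 ?_,
    hf.isSectorMass (m.prodCongr m) (hneg.prod hneg) ?_ R3 ?_,
    hf.isSectorMass (e.prodCongr m) (hid.prod hneg) ?_ R4 ?_⟩,
    hf.isSectorMass s hs ?_ R5 ?_,
    hf.isSectorMass (s.trans (m.prodCongr e)) ((hneg.prod hid).comp hs) ?_ R6 ?_,
    hf.isSectorMass (s.trans (m.prodCongr m)) ((hneg.prod hneg).comp hs) ?_ R7 ?_,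
    hf.isSectorMass (s.trans (e.prodCongr m)) ((hid.prod hneg).comp hs) ?_ R8 ?_⟩
  all_goals first | intro θ; ext ⟨x, y⟩ | ext ⟨x, y⟩
  all_goals
    simp only [e, m, s, Sq, R1, R2, R3, R4, R5, R6, R7, R8, mem_preimage, mem_prod, mem_Icc,
      mem_ofPred_eq, Homeomorph.prodCongr, Homeomorph.prodComm, Homeomorph.trans_apply,
      Prod.map, Prod.swap,
      Homeomorph.refl_apply, Homeomorph.homeomorph_mk_coe, Equiv.prodCongr_apply,
      Equiv.prodComm_apply, Homeomorph.coe_toEquiv, Homeomorph.coe_neg, neg_neg, neg_lt_zero,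
      neg_le (a := (1 : ℝ))]
    first | done | grind

/-! ### Components of the best-response map -/

/-- Where the denominator vanishes and the numerator does not, the component is rewritten locally
as `π / 2 - arctan (den / num)`. -/
lemma continuousWithinAt_BRcomp {X : Type*} [TopologicalSpace X] {a b : X → ℝ} {s : Set X} {x : X}
    (ha : ContinuousWithinAt a s x) (hb : ContinuousWithinAt b s x) (hb0 : ∀ y, 0 ≤ b y)
    (hx : b x = 0 → 0 < a x) :
    ContinuousWithinAt (fun y => BRcomp (a y) (b y)) s x := by
  by_cases h : b x = 0
  · have key : ∀ y, 0 < a y → BRcomp (a y) (b y) = π / 2 - arctan (b y / a y) := by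
      intro y hy
      unfold BRcomp
      split_ifs with h0
      · simp [h0]
      · have hpos : 0 < a y / b y := div_pos hy (lt_of_le_of_ne (hb0 y) (Ne.symm h0))
        rw [← inv_div (a y) (b y), arctan_inv_of_pos hpos]
        ring
    have hc : ContinuousWithinAt (fun y => π / 2 - arctan (b y / a y)) s x :=
      continuousWithinAt_const.sub
        (continuous_arctan.continuousAt.comp_continuousWithinAt (hb.div ha (hx h).ne'))
    refine hc.congr_of_eventuallyEq ?_ (key x (hx h))
    filter_upwards [ha.eventually (lt_mem_nhds (hx h))] with y hy using key y hy
  · have hc : ContinuousWithinAt (fun y => arctan (a y / b y)) s x :=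
      continuous_arctan.continuousAt.comp_continuousWithinAt (ha.div hb h)
    refine hc.congr_of_eventuallyEq ?_ (if_neg h)
    filter_upwards [hb.eventually_ne h] with y hy using if_neg hy

/-- A component with numerator `(u (θ i) + v (θ j)) * c` and denominator `(w (θ k) + z (θ l)) * d`
is continuous as soon as `θ k = θ l = 0` excludes `θ i = θ j = 0`. -/
lemma continuousWithinAt_BRcomp_sector {u v w z : ℝ → ℝ} (hu : IsSectorMass u)
    (hv : IsSectorMass v) (hw : IsSectorMass w) (hz : IsSectorMass z) {c d : ℝ} (hc : 0 < c)
    (hd : 0 < d) {s : Set (Fin 8 → ℝ)} (hs : ∀ θ ∈ s, ∀ i, θ i ∈ Icc (0 : ℝ) (π / 2))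
    {θ : Fin 8 → ℝ} (hθ : θ ∈ s) (i j k l : Fin 8)
    (h : θ k = 0 → θ l = 0 → 0 < θ i ∨ 0 < θ j) :
    ContinuousWithinAt
      (fun θ => BRcomp ((u (θ i) + v (θ j)) * c) ((w (θ k) + z (θ l)) * d)) s θ := by
  have hcont : ∀ {g : ℝ → ℝ}, IsSectorMass g → ∀ m : Fin 8,
      ContinuousWithinAt (fun θ : Fin 8 → ℝ => g (θ m)) s θ := fun hg m =>
    (hg.cont (θ m) (hs θ hθ m)).comp (f := fun θ : Fin 8 → ℝ => θ m)
      (continuous_apply m).continuousWithinAt fun η hη => hs η hη m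
  have hzero : ∀ {g : ℝ → ℝ}, IsSectorMass g → ∀ m : Fin 8, g (θ m) = 0 → θ m = 0 := by
    intro g hg m h0
    by_contra hne
    exact (hg.pos _ (lt_of_le_of_ne (hs θ hθ m).1 (Ne.symm hne)) (hs θ hθ m).2).ne' h0
  refine continuousWithinAt_BRcomp (((hcont hu i).add (hcont hv j)).mul continuousWithinAt_const)
    (((hcont hw k).add (hcont hz l)).mul continuousWithinAt_const)
    (fun η => mul_nonneg (add_nonneg (hw.nonneg _) (hz.nonneg _)) hd.le) fun h0 => ?_
  have h1 : w (θ k) + z (θ l) = 0 := (mul_eq_zero.1 h0).resolve_right hd.ne'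
  have hwk := hw.nonneg (θ k)
  have hzl := hz.nonneg (θ l)
  refine mul_pos ?_ hc
  rcases h (hzero hw k (by linarith)) (hzero hz l (by linarith)) with hi | hj
  · exact add_pos_of_pos_of_nonneg (hu.pos _ hi (hs θ hθ i).2) (hv.nonneg _)
  · exact add_pos_of_nonneg_of_pos (hu.nonneg _) (hv.pos _ hj (hs θ hθ j).2)

/-- The best-response map `BR` is continuous on the set `𝓡`. -/
theorem BR_continuousOn (n : ℕ) (hodd : Odd n) (hn : 3 ≤ n)
    (f : ℝ × ℝ → ℝ) (hf : IsNiceDensity f) :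
    ContinuousOn (BR f n) (RSet f n) := by
  obtain ⟨⟨h1, h2, h3, h4⟩, h5, h6, h7, h8⟩ := hf.isSectorMass_all
  obtain ⟨k1, k2, l1, l2⟩ := hf.KL_pos n
  have hmin := hf.θmin_pos n
  have hs : ∀ θ ∈ RSet f n, ∀ i, θ i ∈ Icc (0 : ℝ) (π / 2) := fun θ hθ => hθ.1
  intro θ hθ
  obtain ⟨-, c02, c13, c46, c57⟩ := id hθ
  rw [continuousWithinAt_pi]
  intro i
  fin_cases i
  · exact continuousWithinAt_BRcomp_sector h6 h7 h7 h8 k1 l1 hs hθ 5 6 6 7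
      fun _ _ => Or.inl (by linarith)
  · exact continuousWithinAt_BRcomp_sector h5 h8 h7 h8 k2 l1 hs hθ 4 7 6 7
      fun _ _ => Or.inl (by linarith)
  · exact continuousWithinAt_BRcomp_sector h5 h8 h5 h6 k2 l2 hs hθ 4 7 4 5
      fun _ _ => Or.inr (by linarith)
  · exact continuousWithinAt_BRcomp_sector h6 h7 h5 h6 k1 l2 hs hθ 5 6 4 5
      fun _ _ => Or.inr (by linarith)
  · exact continuousWithinAt_BRcomp_sector h3 h4 h2 h3 l2 k2 hs hθ 2 3 1 2
      fun _ _ => Or.inr (by linarith)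
  · exact continuousWithinAt_BRcomp_sector h3 h4 h1 h4 l2 k1 hs hθ 2 3 0 3
      fun _ _ => Or.inl (by linarith)
  · exact continuousWithinAt_BRcomp_sector h1 h2 h1 h4 l1 k1 hs hθ 0 1 0 3
      fun _ _ => Or.inr (by linarith)
  · exact continuousWithinAt_BRcomp_sector h1 h2 h2 h3 l1 k2 hs hθ 0 1 1 2
      fun _ _ => Or.inl (by linarith)
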